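/- Let r : 2^𝒮 → ℕ be the rank function of a matroid on ground set 𝒮, i.e., r satisfies (R1) 0 ≤ r(S) ≤ |S| for all S ⊆ 𝒮, (R2) r(S) ≤ r(S') whenever S ⊆ S' ⊆ 𝒮, and (R3) r(S ∪ S') + r(S ∩ S') ≤ r(S) + r(S') for all S, S' ⊆ 𝒮. Define the matroidal distributional preference by: S ≿ S' iff |S| = |S'| = q and r(S) ≥ r(S'), together with S ≿ S for every S. Then ≿ satisfies the upper-bound property, the maximizer property, and the improvement property. -/

import Mathlib

open Finset

variable {α : Type*}

/-- Strict part of a distributional preference. -/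
def strictPref (pref : Finset α → Finset α → Prop) (A B : Finset α) : Prop :=
  pref A B ∧ ¬ pref B A

/-- Indifference part of a distributional preference. -/
def indiffPref (pref : Finset α → Finset α → Prop) (A B : Finset α) : Prop :=
  pref A B ∧ pref B A

/-- Incomparability under a distributional preference. -/
def incomparable (pref : Finset α → Finset α → Prop) (A B : Finset α) : Prop :=
  ¬ pref A B ∧ ¬ pref B A

/-- `NW q S` is the collection of non-wasteful subsets of `S`. -/
def NW (q : ℕ) (S : Finset α) : Set (Finset α) :=
  {T | T ⊆ S ∧ T.card = min q S.card}

/-- The frontier of `S`: non-wasteful subsets undominated w.r.t. the preference. -/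
def frontierSet (pref : Finset α → Finset α → Prop) (q : ℕ) (S : Finset α) :
    Set (Finset α) :=
  {T | T ∈ NW q S ∧ ∀ T' ∈ NW q S, ¬ strictPref pref T' T}

/-- The upper-bound property of a distributional preference. -/
def upperBoundProperty [DecidableEq α] (pref : Finset α → Finset α → Prop) (q : ℕ) : Prop :=
  ∀ S S' : Finset α, S.card = q → S'.card = q → incomparable pref S S' →
    ∃ S'' ∈ NW q (S ∪ S'), strictPref pref S'' S ∨ strictPref pref S'' S'

/-- The maximizer property of a distributional preference. -/
def maximizerProperty [DecidableEq α] (pref : Finset α → Finset α → Prop) (q : ℕ) : Prop :=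
  ∀ S S' : Finset α, S ≠ S' → S.card = q → S'.card = q →
    (∀ S'' ∈ NW q (S ∪ S'), pref S S'' ∧ pref S' S'') →
    ∃ s ∈ S \ S', ∃ s' ∈ S' \ S,
      indiffPref pref (S.erase s ∪ {s'}) S ∧ indiffPref pref (S'.erase s' ∪ {s}) S'

/-- The improvement property of a distributional preference. -/
def improvementProperty [DecidableEq α] (pref : Finset α → Finset α → Prop) (q : ℕ) : Prop :=
  ∀ S S' : Finset α, S.card = q → S'.card = q → ∀ s ∈ S \ S',
    (∀ S'' ∈ NW q (S ∪ S'), s ∉ S'' → strictPref pref S S'') →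
    (∀ S'' ∈ NW q (S ∪ S'), s ∈ S'' → pref S S'') →
    ∃ s' ∈ S' \ S, strictPref pref (S'.erase s' ∪ {s}) S'

/-- A choice rule is non-wasteful. -/
def nonWasteful (q : ℕ) (Ch : Finset α → Finset α) : Prop :=
  ∀ S : Finset α, (Ch S).card = min q S.card

/-- A choice rule promotes the distributional preference. -/
def promotesPref (pref : Finset α → Finset α → Prop) (Ch : Finset α → Finset α) : Prop :=
  ∀ S : Finset α, ∀ S' ⊆ S, S'.card = (Ch S).card → ¬ strictPref pref S' (Ch S)

/-- A choice rule guarantees no justified envy with respect to priority ranking `π`. -/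
def noJustifiedEnvy [DecidableEq α] (pref : Finset α → Finset α → Prop)
    (π : α → α → Prop) (Ch : Finset α → Finset α) : Prop :=
  ∀ S : Finset α, ∀ s ∈ Ch S, ∀ s' ∈ S \ Ch S,
    pref ((Ch S).erase s ∪ {s'}) (Ch S) → π s s'

/-- Path independence of a choice rule. -/
def pathIndependent [DecidableEq α] (Ch : Finset α → Finset α) : Prop :=
  ∀ S S' : Finset α, Ch (S ∪ S') = Ch (Ch S ∪ S')

/-- Consistency of a choice rule. -/
def consistentRule [DecidableEq α] (Ch : Finset α → Finset α) : Prop :=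
  ∀ S : Finset α, ∀ s ∈ S, s ∉ Ch S → Ch (S.erase s) = Ch S

/-- Substitutability of a choice rule. -/
def substitutableRule [DecidableEq α] (Ch : Finset α → Finset α) : Prop :=
  ∀ S : Finset α, ∀ s ∈ S, ∀ s' ∈ S, s ≠ s' → s ∈ Ch S → s ∈ Ch (S.erase s')

/-- `l` lists the elements of `A` in strictly decreasing `π`-priority. -/
def descList [DecidableEq α] (π : α → α → Prop) (A : Finset α) (l : List α) : Prop :=
  l.Pairwise π ∧ l.Nodup ∧ l.toFinset = A

/-- `A` priority dominates `B` with respect to `π`. -/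
def priorityDominates [DecidableEq α] (π : α → α → Prop) (A B : Finset α) : Prop :=
  B.card ≤ A.card ∧
  ∀ la lb : List α, descList π A la → descList π B lb →
    ∀ (k : ℕ) (ha : k < la.length) (hb : k < lb.length),
      la.get ⟨k, ha⟩ = lb.get ⟨k, hb⟩ ∨ π (la.get ⟨k, ha⟩) (lb.get ⟨k, hb⟩)

/-- The revealed preference axiom for a choice rule: no revealed-priority cycles. -/
def revealedPrefAxiom [DecidableEq α] (pref : Finset α → Finset α → Prop)
    (Ch : Finset α → Finset α) : Prop :=
  ¬ ∃ (K : ℕ) (s : ℕ → α) (T : ℕ → Finset α), 0 < K ∧ s K = s 0 ∧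
    ∀ k < K, s k ∈ Ch (T k) ∧ s (k + 1) ∈ T k \ Ch (T k) ∧
      pref ((Ch (T k)).erase (s k) ∪ {s (k + 1)}) (Ch (T k))

/-- The matroidal distributional preference induced by a rank function `r`:
`A ≿ B` iff `|A| = |B| = q` and `r A ≥ r B`, together with reflexivity. -/
def matroidalPref {α : Type*} (r : Finset α → ℕ) (q : ℕ) (A B : Finset α) : Prop :=
  A = B ∨ (A.card = q ∧ B.card = q ∧ r B ≤ r A)

/-!
Every two sets of size `q` are comparable, which gives the upper-bound property at once. The other
two properties are exchange properties of sets `S`, `S'` of equal size and an element `s ∈ S \ S'`.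

If `S` and `S'` both have maximal rank among the `q`-subsets of `S ∪ S'`, it is enough to swap `s`
with some `t ∈ S' \ S` without lowering either rank. When `s` is a coloop of `S` and lies in the
closure of `S'`, suppose every `t ∈ S'` outside the closure of `S.erase s` is a coloop of
`insert s S'`. Deleting these `t` from `S'` keeps `s` in its closure, hence in the closure of
`S.erase s`, a contradiction. When `s` is not a coloop of `S`, only the rank of `S'` can drop, and
comparing the nullities of `S` and `insert s S'` yields a suitable `t`.

If instead `S` strictly beats every `q`-subset of `S ∪ S'` avoiding `s`, then `S'` lies in the
closure of `S.erase s`, which does not contain `s`. As `S'` has larger nullity than `S`, some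
`t ∈ S' \ S` is not a coloop of `S'`; replacing it by `s` raises the rank.
-/

/-- Rank functions of matroids, given by the rank axioms (R1)–(R3) on the finite subsets of a
possibly infinite ground set. -/
structure IsMatroidRank [DecidableEq α] (r : Finset α → ℕ) : Prop where
  le_card : ∀ S, r S ≤ #S
  mono : ∀ ⦃S T⦄, S ⊆ T → r S ≤ r T
  submodular : ∀ S T, r (S ∪ T) + r (S ∩ T) ≤ r S + r T

/-- The closure of `X` in the matroid with rank function `r`: the elements whose addition to `X`
does not increase the rank. -/
def rankClosure [DecidableEq α] (r : Finset α → ℕ) (X : Finset α) : Set α :=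
  {u | r (insert u X) ≤ r X}

section NonWasteful

variable [DecidableEq α] {q : ℕ} {S S' T : Finset α} {s t : α}

theorem card_erase_union_singleton (hs : s ∈ S) (ht : t ∉ S) : #(S.erase s ∪ {t}) = #S := by
  grind

theorem mem_NW_union_of_card_eq (hS : #S = q) (hT : #T = q) (h : T ⊆ S ∪ S') :
    T ∈ NW q (S ∪ S') :=
  ⟨h, by rw [hT, min_eq_left (hS ▸ card_le_card subset_union_left)]⟩

theorem erase_union_singleton_mem_NW_union (hS : #S = q) (hs : s ∈ S) (ht : t ∈ S' \ S) :
    S.erase s ∪ {t} ∈ NW q (S ∪ S') :=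
  mem_NW_union_of_card_eq hS (by rw [card_erase_union_singleton hs (mem_sdiff.1 ht).2, hS])
    (by grind)

end NonWasteful

section RankClosure

variable [DecidableEq α] {r : Finset α → ℕ} {S S' : Finset α} {s t : α}

theorem subset_rankClosure (r : Finset α → ℕ) (X : Finset α) : ↑X ⊆ rankClosure r X :=
  fun _ hu ↦ (congrArg r (insert_eq_of_mem hu)).le

theorem notMem_rankClosure_erase (hs : s ∈ S) (h : r (S.erase s) < r S) :
    s ∉ rankClosure r (S.erase s) := by
  simpa only [rankClosure, Set.mem_ofPred_eq, insert_erase hs, not_le] using h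

theorem mem_sdiff_of_notMem_rankClosure_erase (hs : s ∉ S') (htS' : t ∈ S')
    (ht : t ∉ rankClosure r (S.erase s)) : t ∈ S' \ S :=
  mem_sdiff.2 ⟨htS', fun htS ↦
    ht (subset_rankClosure r _ (mem_erase.2 ⟨fun h ↦ hs (h ▸ htS'), htS⟩))⟩

end RankClosure

namespace IsMatroidRank

variable [DecidableEq α] {r : Finset α → ℕ} {A S S' T X : Finset α} {s t : α}

theorem rank_union_le_add_card (hr : IsMatroidRank r) (X Y : Finset α) :
    r (X ∪ Y) ≤ r X + #Y := by
  linarith [hr.submodular X Y, hr.le_card Y]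

theorem rank_insert_le_add_one (hr : IsMatroidRank r) (u : α) (X : Finset α) :
    r (insert u X) ≤ r X + 1 := by
  simpa only [union_comm X, ← insert_eq, card_singleton] using hr.rank_union_le_add_card X {u}

theorem rank_le_rank_erase_add_one (hr : IsMatroidRank r) (u : α) (X : Finset α) :
    r X ≤ r (X.erase u) + 1 :=
  (hr.mono (insert_erase_subset u X)).trans (hr.rank_insert_le_add_one u _)

theorem rankClosure_mono (hr : IsMatroidRank r) (h : X ⊆ S) :
    rankClosure r X ⊆ rankClosure r S := by
  intro u (hu : r (insert u X) ≤ r X)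
  have submod := hr.submodular S (insert u X)
  have inter : r X ≤ r (S ∩ insert u X) := hr.mono (by grind)
  rw [union_insert, union_eq_left.2 h] at submod
  change r (insert u S) ≤ r S
  omega

theorem rank_union_le_of_subset_rankClosure (hr : IsMatroidRank r)
    (h : ↑T ⊆ rankClosure r A) : r (A ∪ T) ≤ r A := by
  induction T using Finset.induction_on with
  | empty => rw [union_empty]
  | insert u T _ ih =>
    rw [coe_insert, Set.insert_subset_iff] at h
    rw [union_insert]
    exact (hr.rankClosure_mono subset_union_left h.1).trans (ih h.2)

theorem rankClosure_subset_of_subset (hr : IsMatroidRank r) (h : ↑X ⊆ rankClosure r A) :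
    rankClosure r X ⊆ rankClosure r A := fun u hu ↦
  calc r (insert u A) ≤ r (insert u (A ∪ X)) := hr.mono (by grind)
    _ ≤ r (A ∪ X) := hr.rankClosure_mono subset_union_right hu
    _ ≤ r A := hr.rank_union_le_of_subset_rankClosure h

theorem exists_mem_notMem_rankClosure_of_rank_lt (hr : IsMatroidRank r) (h : r A < r X) :
    ∃ t ∈ X, t ∉ rankClosure r A := by
  by_contra! hX
  exact h.not_ge <| (hr.mono subset_union_right).trans <|
    hr.rank_union_le_of_subset_rankClosure hX

theorem rank_sdiff_add_card_le_of_coloops (hr : IsMatroidRank r) (hTX : T ⊆ X)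
    (hT : ∀ t ∈ T, r (X.erase t) < r X) : r (X \ T) + #T ≤ r X := by
  induction T using Finset.induction_on with
  | empty => simp only [sdiff_empty, card_empty, add_zero, le_refl]
  | insert t T ht ih =>
    have ih := ih (by grind) (by grind)
    have submod := hr.submodular (X \ T) (X.erase t)
    have ht_coloop := hT t (mem_insert_self t T)
    rw [show X \ T ∪ X.erase t = X by grind,
      show X \ T ∩ X.erase t = X \ insert t T by grind] at submod
    rw [card_insert_of_notMem ht]
    omega

-- A circuit contains no coloop, so one through `s` in `insert s X` avoids `T`.
theorem mem_rankClosure_sdiff_of_coloops (hr : IsMatroidRank r) (hs : s ∈ rankClosure r X)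
    (hsT : s ∉ T) (hTX : T ⊆ X) (hT : ∀ t ∈ T, r ((insert s X).erase t) < r (insert s X)) :
    s ∈ rankClosure r (X \ T) := by
  have coloops := hr.rank_sdiff_add_card_le_of_coloops (hTX.trans (subset_insert s X)) hT
  have union := hr.rank_union_le_add_card (X \ T) T
  rw [sdiff_union_of_subset hTX] at union
  rw [insert_sdiff_of_notMem X hsT] at coloops
  change r (insert s X) ≤ r X at hs
  change r (insert s (X \ T)) ≤ r (X \ T)
  omega

-- The hypothesis compares nullities: `#S - r S < #X - r X`. Deleting the coloops of `X` outside `S`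
-- would preserve the nullity of `X`, while nullity is monotone.
theorem exists_mem_sdiff_rank_le_rank_erase (hr : IsMatroidRank r)
    (h : #S + r X < #X + r S) : ∃ t ∈ X \ S, r X ≤ r (X.erase t) := by
  by_contra! coloop
  have coloops := hr.rank_sdiff_add_card_le_of_coloops sdiff_subset coloop
  have union := hr.rank_union_le_add_card (X ∩ S) (S \ X)
  rw [sdiff_sdiff_self_left] at coloops
  rw [inter_comm, union_comm, sdiff_union_inter, inter_comm] at union
  have := card_sdiff_add_card_inter S X
  have := card_sdiff_add_card_inter X S
  rw [inter_comm X S] at this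
  omega

-- A circuit through `s` in `insert s X` and a cocircuit through `s` avoiding `A` cannot meet in `s`
-- alone; their second common element is `t`.
theorem exists_notMem_rankClosure_rank_le_exchange (hr : IsMatroidRank r)
    (hX : s ∈ rankClosure r X) (hA : s ∉ rankClosure r A) :
    ∃ t ∈ X, t ∉ rankClosure r A ∧ r X ≤ r (insert s (X.erase t)) := by
  classical
  by_contra! exchange_lt
  let T := {t ∈ X | t ∉ rankClosure r A}
  have hsT : s ∉ T := by
    intro hs
    obtain ⟨hsX, -⟩ := mem_filter.1 hs
    exact (exchange_lt s hsX hA).ne (by rw [insert_erase hsX])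
  have coloops : ∀ t ∈ T, r ((insert s X).erase t) < r (insert s X) := by
    intro t ht
    obtain ⟨htX, htA⟩ := mem_filter.1 ht
    rw [erase_insert_of_ne (ne_of_mem_of_not_mem ht hsT).symm]
    exact (exchange_lt t htX htA).trans_le (hr.mono (subset_insert s X))
  have rest_subset : ↑(X \ T) ⊆ rankClosure r A := by
    intro t ht
    by_contra htA
    exact (mem_sdiff.1 ht).2 (mem_filter.2 ⟨(mem_sdiff.1 ht).1, htA⟩)
  exact hA <| hr.rankClosure_subset_of_subset rest_subset <|
    hr.mem_rankClosure_sdiff_of_coloops hX hsT (filter_subset _ X) coloops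

theorem rank_le_rank_insert_erase_of_notMem_rankClosure (hr : IsMatroidRank r) (hst : s ≠ t)
    (h : s ∉ rankClosure r X) : r X ≤ r (insert s (X.erase t)) := by
  have hlt : r X < r (insert s X) := not_le.1 h
  have herase := hr.rank_le_rank_erase_add_one t (insert s X)
  rw [erase_insert_of_ne hst] at herase
  omega

theorem rank_le_rank_insert_of_notMem_rankClosure_erase (hr : IsMatroidRank r)
    (h : t ∉ rankClosure r (S.erase s)) : r S ≤ r (insert t (S.erase s)) :=
  (hr.rank_le_rank_erase_add_one s S).trans (Nat.succ_le_of_lt (not_le.1 h))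

theorem exists_mem_sdiff_rank_le_exchange (hr : IsMatroidRank r) (hcard : #S ≤ #S')
    (hrank : r S' ≤ r S) (hs : s ∈ S \ S') :
    ∃ t ∈ S' \ S, r S' ≤ r (insert s (S'.erase t)) := by
  obtain ⟨hsS, hsS'⟩ := mem_sdiff.1 hs
  by_cases hclosure : s ∈ rankClosure r S'
  · obtain ⟨t, ht, hle⟩ : ∃ t ∈ insert s S' \ S, r (insert s S') ≤ r ((insert s S').erase t) := by
      refine hr.exists_mem_sdiff_rank_le_rank_erase ?_
      have hclosure : r (insert s S') ≤ r S' := hclosure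
      rw [card_insert_of_notMem hsS']
      omega
    rw [insert_sdiff_of_mem S' hsS] at ht
    rw [erase_insert_of_ne (by grind)] at hle
    exact ⟨t, ht, (hr.mono (subset_insert s S')).trans hle⟩
  · obtain ⟨t, ht⟩ : (S' \ S).Nonempty :=
      card_pos.1 <| (card_pos.2 ⟨s, hs⟩).trans_le (card_sdiff_le_card_sdiff_iff.2 hcard)
    exact ⟨t, ht,
      hr.rank_le_rank_insert_erase_of_notMem_rankClosure (by grind) hclosure⟩

theorem exists_symmetric_exchange (hr : IsMatroidRank r) (hcard : #S ≤ #S') (hrank : r S = r S')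
    (hs : s ∈ S \ S') :
    ∃ t ∈ S' \ S, r S ≤ r (insert t (S.erase s)) ∧ r S' ≤ r (insert s (S'.erase t)) := by
  obtain ⟨hsS, hsS'⟩ := mem_sdiff.1 hs
  by_cases hcoloop : r (S.erase s) < r S
  · obtain ⟨t, htS', htA, hle⟩ : ∃ t ∈ S', t ∉ rankClosure r (S.erase s) ∧
        r S' ≤ r (insert s (S'.erase t)) := by
      by_cases hclosure : s ∈ rankClosure r S'
      · exact hr.exists_notMem_rankClosure_rank_le_exchange hclosure
          (notMem_rankClosure_erase hsS hcoloop)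
      · obtain ⟨t, ht, htA⟩ :=
          hr.exists_mem_notMem_rankClosure_of_rank_lt (hcoloop.trans_eq hrank)
        exact ⟨t, ht, htA,
          hr.rank_le_rank_insert_erase_of_notMem_rankClosure (by grind) hclosure⟩
    exact ⟨t, mem_sdiff_of_notMem_rankClosure_erase hsS' htS' htA,
      hr.rank_le_rank_insert_of_notMem_rankClosure_erase htA, hle⟩
  · obtain ⟨t, ht, hle⟩ := hr.exists_mem_sdiff_rank_le_exchange hcard hrank.ge hs
    exact ⟨t, ht, (not_lt.1 hcoloop).trans (hr.mono (subset_insert t _)), hle⟩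

theorem exists_exchange_rank_lt (hr : IsMatroidRank r) (hcard : #S ≤ #S') (hrank : r S' < r S)
    (hs : s ∈ S \ S') (hlt : ∀ t ∈ S' \ S, r (insert t (S.erase s)) < r S) :
    ∃ t ∈ S' \ S, r S' < r (insert s (S'.erase t)) := by
  obtain ⟨hsS, hsS'⟩ := mem_sdiff.1 hs
  obtain ⟨t, ht, hle⟩ := hr.exists_mem_sdiff_rank_le_rank_erase (add_lt_add_of_le_of_lt hcard hrank)
  have hcoloop : r (S.erase s) < r S := (hr.mono (subset_insert t _)).trans_lt (hlt t ht)
  have hS' : ↑S' ⊆ rankClosure r (S.erase s) := by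
    intro u hu
    by_contra huA
    exact (hr.rank_le_rank_insert_of_notMem_rankClosure_erase huA).not_gt
      (hlt u (mem_sdiff_of_notMem_rankClosure_erase hsS' hu huA))
  have hs_notMem : s ∉ rankClosure r (S'.erase t) := fun hmem ↦
    notMem_rankClosure_erase hsS hcoloop <| hr.rankClosure_subset_of_subset hS' <|
      hr.rankClosure_mono (erase_subset t S') hmem
  exact ⟨t, ht, hle.trans_lt (not_le.1 hs_notMem)⟩

end IsMatroidRank

section MatroidalPref

variable {r : Finset α → ℕ} {q : ℕ} {S T : Finset α}

theorem rank_le_of_matroidalPref (h : matroidalPref r q S T) : r T ≤ r S := by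
  rcases h with rfl | ⟨-, -, h⟩
  exacts [le_rfl, h]

theorem matroidalPref_iff (hS : #S = q) (hT : #T = q) : matroidalPref r q S T ↔ r T ≤ r S :=
  ⟨rank_le_of_matroidalPref, fun h ↦ .inr ⟨hS, hT, h⟩⟩

theorem strictPref_matroidalPref_iff (hS : #S = q) (hT : #T = q) :
    strictPref (matroidalPref r q) S T ↔ r T < r S := by
  rw [strictPref, matroidalPref_iff hS hT, matroidalPref_iff hT hS, lt_iff_le_not_ge]

theorem indiffPref_matroidalPref_iff (hS : #S = q) (hT : #T = q) :
    indiffPref (matroidalPref r q) S T ↔ r S = r T := by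
  rw [indiffPref, matroidalPref_iff hS hT, matroidalPref_iff hT hS, le_antisymm_iff, and_comm]

variable [DecidableEq α]

theorem upperBoundProperty_matroidalPref (r : Finset α → ℕ) (q : ℕ) :
    upperBoundProperty (matroidalPref r q) q := by
  intro S S' hS hS' ⟨h, h'⟩
  rw [matroidalPref_iff hS hS', not_le] at h
  rw [matroidalPref_iff hS' hS, not_le] at h'
  exact (lt_asymm h h').elim

theorem IsMatroidRank.maximizerProperty_matroidalPref (hr : IsMatroidRank r) (q : ℕ) :
    maximizerProperty (matroidalPref r q) q := by
  intro S S' hne hS hS' hmax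
  have hrank : r S = r S' := le_antisymm
    (rank_le_of_matroidalPref (hmax S (mem_NW_union_of_card_eq hS hS subset_union_left)).2)
    (rank_le_of_matroidalPref (hmax S' (mem_NW_union_of_card_eq hS hS' subset_union_right)).1)
  obtain ⟨s, hs⟩ : (S \ S').Nonempty :=
    sdiff_nonempty.2 fun h ↦ hne (eq_of_subset_of_card_le h (hS'.trans hS.symm).le)
  obtain ⟨t, ht, hle, hle'⟩ := hr.exists_symmetric_exchange (hS.trans hS'.symm).le hrank hs
  rw [← union_singleton] at hle hle'
  obtain ⟨hsS, hsS'⟩ := mem_sdiff.1 hs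
  obtain ⟨htS', htS⟩ := mem_sdiff.1 ht
  have hNW : S.erase s ∪ {t} ∈ NW q (S ∪ S') := erase_union_singleton_mem_NW_union hS hsS ht
  have hNW' : S'.erase t ∪ {s} ∈ NW q (S ∪ S') :=
    union_comm S' S ▸ erase_union_singleton_mem_NW_union hS' htS' hs
  refine ⟨s, hs, t, ht, ?_, ?_⟩
  · exact (indiffPref_matroidalPref_iff ((card_erase_union_singleton hsS htS).trans hS) hS).2 <|
      hle.antisymm' (rank_le_of_matroidalPref (hmax _ hNW).1)
  · exact (indiffPref_matroidalPref_iff ((card_erase_union_singleton htS' hsS').trans hS') hS').2 <|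
      hle'.antisymm' (rank_le_of_matroidalPref (hmax _ hNW').2)

theorem IsMatroidRank.improvementProperty_matroidalPref (hr : IsMatroidRank r) (q : ℕ) :
    improvementProperty (matroidalPref r q) q := by
  intro S S' hS hS' s hs hstrict _
  obtain ⟨hsS, hsS'⟩ := mem_sdiff.1 hs
  have hrank : r S' < r S := (strictPref_matroidalPref_iff hS hS').1 <|
    hstrict S' (mem_NW_union_of_card_eq hS hS' subset_union_right) hsS'
  have hlt : ∀ t ∈ S' \ S, r (insert t (S.erase s)) < r S := by
    intro t ht
    have hcard := (card_erase_union_singleton hsS (mem_sdiff.1 ht).2).trans hS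
    rw [← union_singleton]
    exact (strictPref_matroidalPref_iff hS hcard).1 <|
      hstrict _ (erase_union_singleton_mem_NW_union hS hsS ht) (by grind)
  obtain ⟨t, ht, hlt'⟩ := hr.exists_exchange_rank_lt (hS.trans hS'.symm).le hrank hs hlt
  rw [← union_singleton] at hlt'
  have hcard' := (card_erase_union_singleton (mem_sdiff.1 ht).1 hsS').trans hS'
  exact ⟨t, ht, (strictPref_matroidalPref_iff hcard' hS').2 hlt'⟩

end MatroidalPref

theorem stmt14_general [DecidableEq α] {r : Finset α → ℕ} (hr : IsMatroidRank r) (q : ℕ) :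
    upperBoundProperty (matroidalPref r q) q ∧
    maximizerProperty (matroidalPref r q) q ∧
    improvementProperty (matroidalPref r q) q :=
  ⟨upperBoundProperty_matroidalPref r q, hr.maximizerProperty_matroidalPref q,
    hr.improvementProperty_matroidalPref q⟩

/-- If `r` is the rank function of a matroid on `𝒮` (cardinality
bound, monotonicity, submodularity), then the matroidal distributional
preference satisfies the upper-bound, maximizer, and improvement properties. -/
theorem stmt14 {α : Type*} [Fintype α] [Nonempty α] [DecidableEq α]
    (q : ℕ) (hq : 0 < q) (r : Finset α → ℕ)
    (hR1 : ∀ S : Finset α, r S ≤ S.card)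
    (hR2 : ∀ S S' : Finset α, S ⊆ S' → r S ≤ r S')
    (hR3 : ∀ S S' : Finset α, r (S ∪ S') + r (S ∩ S') ≤ r S + r S') :
    upperBoundProperty (matroidalPref r q) q ∧
    maximizerProperty (matroidalPref r q) q ∧
    improvementProperty (matroidalPref r q) q := by
  exact stmt14_general ⟨hR1, hR2, hR3⟩ q
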